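/- Let 0 < d < 4/5. Then ∫₀¹∫₀¹ u^{2-2d}(1-u)^{1-2d} v^{1-d} (1-uv)^{-d} ₂F₁(1,d;2-d;v) dv du = [(1-d)² Γ(1-d)² Γ(2-2d)² Γ(3-3d) / (Γ(2-d) Γ(d) (4-5d) Γ(4-4d) Γ(5-5d))] · ₃F₂(2-2d, 3-3d, 4-5d; 4-4d, 5-5d; 1). -/

import Mathlib

open Real MeasureTheory

/-- Pochhammer symbol `(a)_k = a (a+1) ⋯ (a+k-1)` for real `a`. -/
noncomputable def poch (a : ℝ) (k : ℕ) : ℝ := (ascPochhammer ℝ k).eval a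

/-- Gaussian hypergeometric function `₂F₁(a,b;c;z)`. -/
noncomputable def hyp2F1 (a b c z : ℝ) : ℝ :=
  ∑' k : ℕ, (poch a k * poch b k) / poch c k * z ^ k / (Nat.factorial k)

/-- Generalized hypergeometric function `₃F₂(a₁,a₂,a₃;b₁,b₂;z)`. -/
noncomputable def hyp3F2 (a₁ a₂ a₃ b₁ b₂ z : ℝ) : ℝ :=
  ∑' k : ℕ, (poch a₁ k * poch a₂ k * poch a₃ k) / (poch b₁ k * poch b₂ k) * z ^ k /
    (Nat.factorial k)

/-- Generalized hypergeometric function `₄F₃(a₁,a₂,a₃,a₄;b₁,b₂,b₃;z)`. -/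
noncomputable def hyp4F3 (a₁ a₂ a₃ a₄ b₁ b₂ b₃ z : ℝ) : ℝ :=
  ∑' k : ℕ, (poch a₁ k * poch a₂ k * poch a₃ k * poch a₄ k) /
    (poch b₁ k * poch b₂ k * poch b₃ k) * z ^ k / (Nat.factorial k)

/-!
All integrands are nonnegative, so every manipulation is carried out for integrals and series with
values in `[0, ∞]`, where the order of integration and summation is free.

Write `E(a,p,q;x)` for Euler's integral `∫₀¹ y^(p-1) (1-y)^(q-1) (1-xy)^(-a) dy`, a multiple of
`₂F₁(a,p;p+q;x)`. Integrating the left-hand side first over `u` gives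
`∫₀¹ v^(c-1) ₂F₁(1,b;c;v) E(a,c-b+1,q;v) dv`, with `a = b = d`, `c = 2-d` and `q = 2-2d`. Euler's
transformation `E(a,p,q;x) = (1-x)^(q-a) E(p+q-a,q,p;x)`, which is the substitution
`y ↦ (1-y)/(1-xy)`, turns the two hypergeometric factors into an incomplete beta integral
`∫₀^v x^(c-2) (1-x)^(b-c) dx` and into `E(m+1,q,c-b+1;v)`, where `m = q+c-a-b`. Integration by
parts in `v` removes the inner integral and lowers `E(m+1,q,c-b+1)` to `E(m,q,c-b)`, and expanding
the latter leaves a single `₃F₂` at `1`. Thomae's transformation, which is Euler's transformation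
inside a double integral, brings it into the stated form.
-/

open Set
open scoped ENNReal
open ProbabilityTheory (beta)

section RealPower

/-- The real power `x ^ s` as an element of `[0, ∞]`, in which the order of integration can be
changed freely. It is meant for `0 ≤ x`; elsewhere `ENNReal.ofReal` may truncate. -/
noncomputable def epow (x s : ℝ) : ℝ≥0∞ := ENNReal.ofReal (x ^ s)

@[fun_prop]
lemma measurable_epow {α : Type*} [MeasurableSpace α] {f : α → ℝ} (hf : Measurable f) (s : ℝ) :
    Measurable fun x => epow (f x) s := by
  unfold epow
  fun_prop

@[simp]
lemma epow_zero (x : ℝ) : epow x 0 = 1 := by simp [epow]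

@[simp]
lemma one_epow (s : ℝ) : epow 1 s = 1 := by simp [epow]

lemma epow_one (x : ℝ) : epow x 1 = ENNReal.ofReal x := by simp [epow]

lemma epow_natCast (x : ℝ) (k : ℕ) : epow x k = ENNReal.ofReal (x ^ k) := by simp [epow]

lemma toReal_epow {x : ℝ} (hx : 0 ≤ x) (s : ℝ) : (epow x s).toReal = x ^ s :=
  ENNReal.toReal_ofReal (rpow_nonneg hx s)

lemma epow_add {x : ℝ} (hx : 0 < x) (s t : ℝ) : epow x (s + t) = epow x s * epow x t := by
  rw [epow, rpow_add hx, ENNReal.ofReal_mul (by positivity), epow, epow]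

lemma mul_epow {x y : ℝ} (hx : 0 ≤ x) (hy : 0 ≤ y) (s : ℝ) :
    epow (x * y) s = epow x s * epow y s := by
  rw [epow, mul_rpow hx hy, ENNReal.ofReal_mul (by positivity), epow, epow]

lemma div_epow {x y : ℝ} (hx : 0 ≤ x) (hy : 0 ≤ y) (s : ℝ) :
    epow (x / y) s = epow x s * epow y (-s) := by
  rw [epow, div_rpow hx hy, div_eq_mul_inv, ← rpow_neg hy, ENNReal.ofReal_mul (by positivity),
    epow, epow]

lemma epow_le_epow_of_nonpos {x y s : ℝ} (hx : 0 < x) (hxy : x ≤ y) (hs : s ≤ 0) :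
    epow y s ≤ epow x s :=
  ENNReal.ofReal_le_ofReal (rpow_le_rpow_of_nonpos hx hxy hs)

lemma lintegral_Ioo_zero_epow {w m : ℝ} (hw : 0 ≤ w) (hm : 0 < m) :
    ∫⁻ z in Ioo 0 w, epow z (m - 1) = ENNReal.ofReal (1 / m) * epow w m := by
  have hint : IntegrableOn (fun z : ℝ => z ^ (m - 1)) (Ioo 0 w) := by
    rw [← intervalIntegrable_iff_integrableOn_Ioo_of_le hw]
    exact intervalIntegral.intervalIntegrable_rpow' (by linarith)
  have hnonneg : 0 ≤ᵐ[volume.restrict (Ioo 0 w)] fun z : ℝ => z ^ (m - 1) :=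
    ae_restrict_of_forall_mem measurableSet_Ioo fun z hz => rpow_nonneg hz.1.le _
  have hval : ∫ z in Ioo 0 w, z ^ (m - 1) = 1 / m * w ^ m := by
    rw [← integral_Ioc_eq_integral_Ioo, ← intervalIntegral.integral_of_le hw,
      integral_rpow (by left; linarith), sub_add_cancel, zero_rpow hm.ne']
    ring
  simp only [epow]
  rw [← ofReal_integral_eq_lintegral_ofReal hint hnonneg, hval, ENNReal.ofReal_mul (by positivity)]

end RealPower

section Beta

lemma poch_pos {a : ℝ} (ha : 0 < a) (k : ℕ) : 0 < poch a k := ascPochhammer_pos k a ha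

lemma poch_succ (a : ℝ) (k : ℕ) : poch a (k + 1) = poch a k * (a + k) := by
  simp [poch, ascPochhammer_succ_eval]

lemma Gamma_add_natCast {a : ℝ} (ha : 0 < a) (k : ℕ) : Gamma (a + k) = poch a k * Gamma a := by
  induction k with
  | zero => simp [poch]
  | succ k ih =>
    rw [Nat.cast_succ, ← add_assoc, Gamma_add_one (by positivity), ih, poch_succ]
    ring

lemma beta_add_natCast {p q : ℝ} (hp : 0 < p) (hq : 0 < q) (k : ℕ) :
    beta (p + k) q = beta p q * (poch p k / poch (p + q) k) := by
  have hpoch := poch_pos (add_pos hp hq) k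
  rw [beta, beta, add_right_comm, Gamma_add_natCast hp, Gamma_add_natCast (add_pos hp hq)]
  field_simp

lemma beta_comm (p q : ℝ) : beta p q = beta q p := by
  rw [beta, beta, mul_comm, add_comm]

lemma beta_one_right {p : ℝ} (hp : 0 < p) : beta p 1 = 1 / p := by
  have := Gamma_pos_of_pos hp
  rw [beta, Gamma_add_one hp.ne', Gamma_one]
  field_simp

lemma lintegral_epow_mul_epow_one_sub {p q : ℝ} (hp : 0 < p) (hq : 0 < q) :
    ∫⁻ x in Ioo (0 : ℝ) 1, epow x (p - 1) * epow (1 - x) (q - 1) = ENNReal.ofReal (beta p q) := by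
  have hB := ProbabilityTheory.beta_pos hp hq
  calc
    _ = ∫⁻ x in Ioo (0 : ℝ) 1, ENNReal.ofReal (beta p q) *
          ENNReal.ofReal (1 / beta p q * x ^ (p - 1) * (1 - x) ^ (q - 1)) := by
      refine setLIntegral_congr_fun measurableSet_Ioo fun x hx => ?_
      have hx0 := hx.1
      rw [epow, epow, ← ENNReal.ofReal_mul (by positivity), ← ENNReal.ofReal_mul hB.le]
      congr 1
      field_simp
    _ = ENNReal.ofReal (beta p q) * ∫⁻ x, ProbabilityTheory.betaPDF p q x := by
      rw [lintegral_const_mul _ (by fun_prop), ProbabilityTheory.lintegral_betaPDF]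
    _ = ENNReal.ofReal (beta p q) := by
      rw [ProbabilityTheory.lintegral_betaPDF_eq_one hp hq, mul_one]

lemma lintegral_epow_mul_epow_one_sub_mul_tsum {p q : ℝ} (hp : 0 < p) (hq : 0 < q) {A : ℕ → ℝ}
    (hA : ∀ k, 0 ≤ A k) :
    ∫⁻ x in Ioo (0 : ℝ) 1, epow x (p - 1) * epow (1 - x) (q - 1) *
        ∑' k, ENNReal.ofReal (A k * x ^ k) =
      ENNReal.ofReal (beta p q) * ∑' k, ENNReal.ofReal (A k * (poch p k / poch (p + q) k)) := by
  calc
    _ = ∫⁻ x in Ioo (0 : ℝ) 1, ∑' k : ℕ, ENNReal.ofReal (A k) *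
          (epow x (p + k - 1) * epow (1 - x) (q - 1)) := by
      refine setLIntegral_congr_fun measurableSet_Ioo fun x hx => ?_
      simp only [← ENNReal.tsum_mul_left]
      refine tsum_congr fun k => ?_
      rw [add_sub_right_comm, epow_add hx.1, epow_natCast, ENNReal.ofReal_mul (hA k)]
      ring
    _ = ∑' k : ℕ, ENNReal.ofReal (A k) * ENNReal.ofReal (beta (p + k) q) := by
      rw [lintegral_tsum fun k => by fun_prop]
      refine tsum_congr fun k => ?_
      rw [lintegral_const_mul _ (by fun_prop), lintegral_epow_mul_epow_one_sub (by positivity) hq]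
    _ = _ := by
      rw [← ENNReal.tsum_mul_left]
      refine tsum_congr fun k => ?_
      rw [beta_add_natCast hp hq, ← ENNReal.ofReal_mul (hA k),
        ← ENNReal.ofReal_mul (ProbabilityTheory.beta_pos hp hq).le]
      congr 1
      ring

end Beta

section Hypergeometric

/-- The series `₂F₁(a,b;c;x)` summed in `[0, ∞]`, so that a divergent series has the value `∞`. It
represents `hyp2F1` for positive parameters and `0 ≤ x`, where all its terms are nonnegative. -/
noncomputable def ehyp2F1 (a b c x : ℝ) : ℝ≥0∞ :=
  ∑' k : ℕ, ENNReal.ofReal ((poch a k * poch b k) / poch c k * x ^ k / (Nat.factorial k))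

/-- The series `₃F₂(a₁,a₂,a₃;b₁,b₂;x)` summed in `[0, ∞]`; see `ehyp2F1`. -/
noncomputable def ehyp3F2 (a₁ a₂ a₃ b₁ b₂ x : ℝ) : ℝ≥0∞ :=
  ∑' k : ℕ, ENNReal.ofReal ((poch a₁ k * poch a₂ k * poch a₃ k) / (poch b₁ k * poch b₂ k) *
    x ^ k / (Nat.factorial k))

lemma ehyp2F1_comm (a b c x : ℝ) : ehyp2F1 a b c x = ehyp2F1 b a c x := by
  simp only [ehyp2F1, mul_comm]

lemma ehyp3F2_comm (a₁ a₂ a₃ b₁ b₂ x : ℝ) :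
    ehyp3F2 a₁ a₂ a₃ b₁ b₂ x = ehyp3F2 a₂ a₁ a₃ b₁ b₂ x := by
  simp only [ehyp3F2, mul_comm (poch a₁ _)]

@[fun_prop]
lemma measurable_ehyp2F1 (a b c : ℝ) : Measurable (ehyp2F1 a b c) :=
  Measurable.tsum fun k => by fun_prop

lemma toReal_ehyp2F1 {a b c x : ℝ} (ha : 0 < a) (hb : 0 < b) (hc : 0 < c) (hx : 0 ≤ x) :
    (ehyp2F1 a b c x).toReal = hyp2F1 a b c x := by
  rw [ehyp2F1, ENNReal.tsum_toReal_eq fun _ => ENNReal.ofReal_ne_top, hyp2F1]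
  refine tsum_congr fun k => ENNReal.toReal_ofReal ?_
  have := poch_pos ha k
  have := poch_pos hb k
  have := poch_pos hc k
  positivity

lemma toReal_ehyp3F2 {a₁ a₂ a₃ b₁ b₂ x : ℝ} (ha₁ : 0 < a₁) (ha₂ : 0 < a₂) (ha₃ : 0 < a₃)
    (hb₁ : 0 < b₁) (hb₂ : 0 < b₂) (hx : 0 ≤ x) :
    (ehyp3F2 a₁ a₂ a₃ b₁ b₂ x).toReal = hyp3F2 a₁ a₂ a₃ b₁ b₂ x := by
  rw [ehyp3F2, ENNReal.tsum_toReal_eq fun _ => ENNReal.ofReal_ne_top, hyp3F2]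
  refine tsum_congr fun k => ENNReal.toReal_ofReal ?_
  have := poch_pos ha₁ k
  have := poch_pos ha₂ k
  have := poch_pos ha₃ k
  have := poch_pos hb₁ k
  have := poch_pos hb₂ k
  positivity

lemma lintegral_epow_mul_epow_one_sub_mul_ehyp2F1 {a b c p q t : ℝ} (ha : 0 < a) (hb : 0 < b)
    (hc : 0 < c) (hp : 0 < p) (hq : 0 < q) (ht : 0 ≤ t) :
    ∫⁻ x in Ioo (0 : ℝ) 1, epow x (p - 1) * epow (1 - x) (q - 1) * ehyp2F1 a b c (t * x) =
      ENNReal.ofReal (beta p q) * ehyp3F2 a b p c (p + q) t := by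
  have hA (k : ℕ) : 0 ≤ poch a k * poch b k / poch c k * t ^ k / Nat.factorial k := by
    have := poch_pos ha k
    have := poch_pos hb k
    have := poch_pos hc k
    positivity
  convert lintegral_epow_mul_epow_one_sub_mul_tsum hp hq hA using 4 with x
  · exact tsum_congr fun k => by congr 1; ring
  · exact tsum_congr fun k => by congr 1; ring

lemma hasSum_one_sub_rpow_neg (a : ℝ) {z : ℝ} (hz : |z| < 1) :
    HasSum (fun k : ℕ => poch a k / Nat.factorial k * z ^ k) ((1 - z) ^ (-a)) := by
  have hchoose (k : ℕ) : Ring.choose (a + k - 1) k = poch a k / Nat.factorial k := by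
    rw [Ring.choose, show a + k - 1 - k + 1 = a by ring, eq_div_iff (by positivity), poch,
      ← Polynomial.ascPochhammer_smeval_eq_eval,
      ← Ring.factorial_nsmul_multichoose_eq_ascPochhammer, nsmul_eq_mul, mul_comm]
  have h := (one_div_one_sub_rpow_hasFPowerSeriesOnBall_zero a).hasSum (y := z)
    (by simpa [enorm_eq_nnnorm, ← NNReal.coe_lt_coe] using hz)
  have hpos : 0 ≤ 1 - z := by linarith [le_abs_self z]
  simpa [hchoose, rpow_neg hpos, mul_comm] using h

lemma epow_one_sub_neg_eq_tsum {a z : ℝ} (ha : 0 < a) (hz0 : 0 ≤ z) (hz1 : z < 1) :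
    epow (1 - z) (-a) = ∑' k : ℕ, ENNReal.ofReal (poch a k / Nat.factorial k * z ^ k) := by
  have h := hasSum_one_sub_rpow_neg a (abs_lt.2 ⟨by linarith, hz1⟩)
  rw [epow, ← h.tsum_eq, ENNReal.ofReal_tsum_of_nonneg (fun k => ?_) h.summable]
  have := poch_pos ha k
  positivity

end Hypergeometric

section Moebius

/-- The involution `y ↦ (1 - y) / (1 - x y)` of the unit interval, for `x < 1`. Substituting it
into a product of powers of `y`, `1 - y` and `1 - x y` yields another such product, times a power
of `1 - x`. -/
noncomputable def moebius (x y : ℝ) : ℝ := (1 - y) / (1 - x * y)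

variable {x y : ℝ}

lemma one_sub_mul_pos (hx : x < 1) (hy : y ∈ Icc (0 : ℝ) 1) : 0 < 1 - x * y := by
  rcases hy.1.eq_or_lt with rfl | hy0
  · simp
  · nlinarith [hy.2]

lemma one_sub_moebius (h : 1 - x * y ≠ 0) :
    1 - moebius x y = y * (1 - x) / (1 - x * y) := by
  rw [moebius, eq_div_iff h, sub_mul, div_mul_cancel₀ _ h]
  ring

lemma one_sub_mul_moebius (h : 1 - x * y ≠ 0) :
    1 - x * moebius x y = (1 - x) / (1 - x * y) := by
  rw [moebius]
  field_simp
  ring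

lemma moebius_moebius (hx : x ≠ 1) (h : 1 - x * y ≠ 0) : moebius x (moebius x y) = y := by
  have hx' : 1 - x ≠ 0 := sub_ne_zero.2 hx.symm
  rw [moebius, one_sub_moebius h, one_sub_mul_moebius h, div_div_div_cancel_right₀ h,
    mul_div_cancel_right₀ _ hx']

lemma moebius_zero_right (x : ℝ) : moebius x 0 = 1 := by simp [moebius]

lemma moebius_one_right (x : ℝ) : moebius x 1 = 0 := by simp [moebius]

lemma strictAntiOn_moebius (hx : x < 1) : StrictAntiOn (moebius x) (Icc 0 1) := by
  intro y hy z hz hyz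
  rw [moebius, moebius, div_lt_div_iff₀ (one_sub_mul_pos hx hz) (one_sub_mul_pos hx hy)]
  nlinarith

lemma mapsTo_moebius (hx : x < 1) : MapsTo (moebius x) (Icc 0 1) (Icc 0 1) := by
  simpa only [moebius_zero_right, moebius_one_right] using
    (strictAntiOn_moebius hx).antitoneOn.mapsTo_Icc

lemma moebius_image_Ioo (hx : x < 1) {a : ℝ} (ha : a ∈ Icc (0 : ℝ) 1) :
    moebius x '' Ioo a 1 = Ioo 0 (moebius x a) := by
  have hanti := strictAntiOn_moebius hx
  have hone : (1 : ℝ) ∈ Icc (0 : ℝ) 1 := right_mem_Icc.2 zero_le_one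
  have hzero : (0 : ℝ) ∈ Icc (0 : ℝ) 1 := left_mem_Icc.2 zero_le_one
  have hinvol {y : ℝ} (hy : y ∈ Icc (0 : ℝ) 1) : moebius x (moebius x y) = y :=
    moebius_moebius hx.ne (one_sub_mul_pos hx hy).ne'
  ext z
  constructor
  · rintro ⟨y, hy, rfl⟩
    have hy' : y ∈ Icc (0 : ℝ) 1 := ⟨ha.1.trans hy.1.le, hy.2.le⟩
    exact ⟨moebius_one_right x ▸ hanti hy' hone hy.2, hanti ha hy' hy.1⟩
  · intro hz
    have hz' : z ∈ Icc (0 : ℝ) 1 := ⟨hz.1.le, hz.2.le.trans (mapsTo_moebius hx ha).2⟩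
    refine ⟨moebius x z, ⟨?_, ?_⟩, hinvol hz'⟩
    · exact hinvol ha ▸ hanti hz' (mapsTo_moebius hx ha) hz.2
    · exact moebius_zero_right x ▸ hanti hzero hz' hz.1

lemma hasDerivAt_moebius (h : 1 - x * y ≠ 0) :
    HasDerivAt (moebius x) (-((1 - x) / (1 - x * y) ^ 2)) y := by
  refine (((hasDerivAt_id' y).const_sub 1).div (((hasDerivAt_id' y).const_mul x).const_sub 1)
    h).congr_deriv ?_
  rw [← neg_div]
  congr 1
  ring

lemma lintegral_Ioo_comp_moebius (hx : x < 1) {a : ℝ} (ha : a ∈ Icc (0 : ℝ) 1) (g : ℝ → ℝ≥0∞) :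
    ∫⁻ z in Ioo 0 (moebius x a), g z =
      ∫⁻ y in Ioo a 1, epow (1 - x) 1 * epow (1 - x * y) (-2) * g (moebius x y) := by
  have hsub : Ioo a 1 ⊆ Icc 0 1 := fun y hy => ⟨ha.1.trans hy.1.le, hy.2.le⟩
  rw [← moebius_image_Ioo hx ha, lintegral_image_eq_lintegral_deriv_mul_of_antitoneOn
    measurableSet_Ioo
    (fun y hy => (hasDerivAt_moebius (one_sub_mul_pos hx (hsub hy)).ne').hasDerivWithinAt)
    ((strictAntiOn_moebius hx).antitoneOn.mono hsub)]
  refine setLIntegral_congr_fun measurableSet_Ioo fun y hy => ?_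
  have hpos := one_sub_mul_pos hx (hsub hy)
  rw [neg_neg, epow_one, epow, rpow_neg hpos.le, rpow_two, ← ENNReal.ofReal_mul (by linarith),
    div_eq_mul_inv]

/-- The integrand is the derivative of a multiple of `moebius u v ^ m`. -/
lemma lintegral_Ioo_epow_one_sub_mul_epow_one_sub_mul {u m : ℝ} (hu : u < 1) (hm : 0 < m)
    (hx : x ∈ Ico (0 : ℝ) 1) :
    ∫⁻ v in Ioo x 1, epow (1 - v) (m - 1) * epow (1 - u * v) (-(m + 1)) =
      ENNReal.ofReal (1 / m) * epow (1 - u) (-1) * (epow (1 - x) m * epow (1 - u * x) (-m)) := by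
  have hx' : x ∈ Icc (0 : ℝ) 1 := ⟨hx.1, hx.2.le⟩
  have hsub : Ioo x 1 ⊆ Icc 0 1 := fun y hy => ⟨hx.1.trans hy.1.le, hy.2.le⟩
  have hu' : 0 < 1 - u := by linarith
  calc
    _ = epow (1 - u) (-1) * ∫⁻ v in Ioo x 1,
          epow (1 - u) 1 * epow (1 - u * v) (-2) * epow (moebius u v) (m - 1) := by
      simp only [mul_assoc]
      rw [lintegral_const_mul _ (by unfold moebius; fun_prop), ← mul_assoc, ← epow_add hu',
        neg_add_cancel, epow_zero, one_mul]
      refine setLIntegral_congr_fun measurableSet_Ioo fun v hv => ?_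
      have hpos := one_sub_mul_pos hu (hsub hv)
      rw [moebius, div_epow (by linarith [hv.2]) hpos.le, mul_left_comm, ← epow_add hpos]
      ring_nf
    _ = epow (1 - u) (-1) * (ENNReal.ofReal (1 / m) * epow (moebius u x) m) := by
      rw [← lintegral_Ioo_comp_moebius hu hx' (fun z => epow z (m - 1)),
        lintegral_Ioo_zero_epow (mapsTo_moebius hu hx').1 hm]
    _ = _ := by
      rw [moebius, div_epow (by linarith [hx.2]) (one_sub_mul_pos hu hx').le]
      ring

end Moebius

section EulerIntegral

/-- Euler's integral `∫₀¹ y ^ (p - 1) (1 - y) ^ (q - 1) (1 - x y) ^ (-a) dy`, with values in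
`[0, ∞]`. For positive parameters and `0 ≤ x < 1` it equals `B(p, q) ₂F₁(a,p;p+q;x)`. -/
noncomputable def eulerIntegral (a p q x : ℝ) : ℝ≥0∞ :=
  ∫⁻ y in Ioo (0 : ℝ) 1, epow y (p - 1) * epow (1 - y) (q - 1) * epow (1 - x * y) (-a)

lemma eulerIntegral_eq_beta_mul_ehyp2F1 {a p q x : ℝ} (ha : 0 < a) (hp : 0 < p) (hq : 0 < q)
    (hx : x ∈ Ico (0 : ℝ) 1) :
    eulerIntegral a p q x = ENNReal.ofReal (beta p q) * ehyp2F1 a p (p + q) x := by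
  have hA (k : ℕ) : 0 ≤ poch a k / Nat.factorial k * x ^ k := by
    have := poch_pos ha k
    have := hx.1
    positivity
  calc
    _ = ∫⁻ y in Ioo (0 : ℝ) 1, epow y (p - 1) * epow (1 - y) (q - 1) *
          ∑' k : ℕ, ENNReal.ofReal (poch a k / Nat.factorial k * x ^ k * y ^ k) := by
      refine setLIntegral_congr_fun measurableSet_Ioo fun y hy => ?_
      simp only [mul_assoc, ← mul_pow]
      rw [epow_one_sub_neg_eq_tsum ha (mul_nonneg hx.1 hy.1.le) (by nlinarith [hx.1, hx.2, hy.2])]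
    _ = _ := by
      rw [lintegral_epow_mul_epow_one_sub_mul_tsum hp hq hA]
      congr 1
      exact tsum_congr fun k => by congr 1; ring

/-- Euler's transformation, obtained by substituting `moebius x y` for `y`. -/
lemma eulerIntegral_eq_epow_mul_eulerIntegral {x : ℝ} (hx : x < 1) (a p q : ℝ) :
    eulerIntegral a p q x = epow (1 - x) (q - a) * eulerIntegral (p + q - a) q p x := by
  have hx' : 0 < 1 - x := by linarith
  rw [eulerIntegral, eulerIntegral, ← moebius_zero_right x,
    lintegral_Ioo_comp_moebius hx (left_mem_Icc.2 zero_le_one), moebius_zero_right,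
    ← lintegral_const_mul _ (by fun_prop)]
  refine setLIntegral_congr_fun measurableSet_Ioo fun y hy => ?_
  have hpos := one_sub_mul_pos hx (Ioo_subset_Icc_self hy)
  rw [one_sub_moebius hpos.ne', one_sub_mul_moebius hpos.ne', moebius,
    div_epow (by linarith [hy.2]) hpos.le, div_epow (mul_nonneg hy.1.le hx'.le) hpos.le,
    div_epow hx'.le hpos.le, mul_epow hy.1.le hx'.le,
    show q - a = 1 + (q - 1) + -a by ring,
    show -(p + q - a) = -2 + -(p - 1) + -(q - 1) + - -a by ring]
  simp only [epow_add hx', epow_add hpos]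
  ring

@[fun_prop]
lemma measurable_eulerIntegral (a p q : ℝ) : Measurable (eulerIntegral a p q) :=
  Measurable.lintegral_prod_right' (f := fun z : ℝ × ℝ =>
    epow z.2 (p - 1) * epow (1 - z.2) (q - 1) * epow (1 - z.1 * z.2) (-a)) (by fun_prop)

lemma lintegral_mul_eulerIntegral {g : ℝ → ℝ≥0∞} (hg : Measurable g) (a p q : ℝ) :
    ∫⁻ x in Ioo (0 : ℝ) 1, g x * eulerIntegral a p q x =
      ∫⁻ y in Ioo (0 : ℝ) 1, epow y (p - 1) * epow (1 - y) (q - 1) *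
        ∫⁻ x in Ioo (0 : ℝ) 1, g x * epow (1 - y * x) (-a) := by
  calc
    _ = ∫⁻ x in Ioo (0 : ℝ) 1, ∫⁻ y in Ioo (0 : ℝ) 1,
          g x * (epow y (p - 1) * epow (1 - y) (q - 1) * epow (1 - x * y) (-a)) := by
      simp only [eulerIntegral]
      exact lintegral_congr fun x => (lintegral_const_mul _ (by fun_prop)).symm
    _ = ∫⁻ y in Ioo (0 : ℝ) 1, ∫⁻ x in Ioo (0 : ℝ) 1,
          g x * (epow y (p - 1) * epow (1 - y) (q - 1) * epow (1 - x * y) (-a)) :=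
      lintegral_lintegral_swap (by fun_prop)
    _ = _ := by
      refine lintegral_congr fun y => ?_
      rw [← lintegral_const_mul _ (by fun_prop)]
      exact lintegral_congr fun x => by rw [mul_comm x y]; ring

end EulerIntegral

section IncompleteIntegral

lemma ofReal_mul_lintegral_Ioo_comp_mul {v : ℝ} (hv : 0 < v) (f : ℝ → ℝ≥0∞) :
    ENNReal.ofReal v * ∫⁻ y in Ioo (0 : ℝ) 1, f (v * y) = ∫⁻ x in Ioo 0 v, f x := by
  have himage : (fun y => v * y) '' Ioo 0 1 = Ioo 0 v := by
    rw [image_mul_left_Ioo hv, mul_zero, mul_one]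
  rw [← himage, lintegral_image_eq_lintegral_abs_deriv_mul measurableSet_Ioo
    (fun y _ => ((hasDerivAt_id' y).const_mul v).hasDerivWithinAt)
    (mul_right_injective₀ hv.ne').injOn, mul_one, abs_of_pos hv,
    lintegral_const_mul' _ _ ENNReal.ofReal_ne_top]

lemma epow_mul_ehyp2F1_one_eq_mul_lintegral_Ioo {b c v : ℝ} (hb : 0 < b) (hc : 1 < c)
    (hv : v ∈ Ioo (0 : ℝ) 1) :
    epow v (c - 1) * ehyp2F1 1 b c v = ENNReal.ofReal (c - 1) *
      (epow (1 - v) (c - 1 - b) * ∫⁻ x in Ioo 0 v, epow x (c - 2) * epow (1 - x) (b - c)) := by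
  have hc' : 0 < c - 1 := sub_pos.2 hc
  have hcancel : ENNReal.ofReal (c - 1) * ENNReal.ofReal (beta 1 (c - 1)) = 1 := by
    rw [beta_comm, beta_one_right hc', ← ENNReal.ofReal_mul hc'.le, mul_one_div_cancel hc'.ne',
      ENNReal.ofReal_one]
  have heuler : eulerIntegral b 1 (c - 1) v =
      ENNReal.ofReal (beta 1 (c - 1)) * ehyp2F1 1 b c v := by
    rw [eulerIntegral_eq_beta_mul_ehyp2F1 hb one_pos hc' ⟨hv.1.le, hv.2⟩, ehyp2F1_comm,
      add_sub_cancel]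
  have hscale : epow v (c - 1) * eulerIntegral (c - b) (c - 1) 1 v =
      ∫⁻ x in Ioo 0 v, epow x (c - 2) * epow (1 - x) (b - c) := by
    rw [← ofReal_mul_lintegral_Ioo_comp_mul hv.1, eulerIntegral,
      show c - 1 = 1 + (c - 2) by ring, epow_add hv.1, epow_one, mul_assoc,
      ← lintegral_const_mul _ (by fun_prop)]
    congr 1
    refine setLIntegral_congr_fun measurableSet_Ioo fun y hy => ?_
    rw [mul_epow hv.1.le hy.1.le, add_sub_cancel_left, sub_self, epow_zero, neg_sub]
    ring
  rw [← one_mul (epow v _ * _), ← hcancel, mul_assoc, mul_left_comm (ENNReal.ofReal (beta _ _)),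
    ← heuler, eulerIntegral_eq_epow_mul_eulerIntegral hv.2, add_sub_cancel,
    mul_left_comm (epow v _), hscale]

@[fun_prop]
lemma measurable_lintegral_Ioo_right (s : ℝ) (f : ℝ → ℝ≥0∞) :
    Measurable fun v => ∫⁻ x in Ioo s v, f x :=
  Monotone.measurable fun _ _ hvw => lintegral_mono_set (Ioo_subset_Ioo_right hvw)

lemma lintegral_Ioo_mul_lintegral_Ioo_swap {f g : ℝ → ℝ≥0∞} (hf : Measurable f)
    (hg : Measurable g) (s t : ℝ) :
    ∫⁻ v in Ioo s t, g v * ∫⁻ x in Ioo s v, f x =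
      ∫⁻ x in Ioo s t, f x * ∫⁻ v in Ioo x t, g v := by
  have htriangle : MeasurableSet {z : ℝ × ℝ | z.2 < z.1} :=
    measurableSet_lt measurable_snd measurable_fst
  have hmeas : Measurable fun z : ℝ × ℝ => {z : ℝ × ℝ | z.2 < z.1}.indicator
      (fun z => g z.1 * f z.2) z := Measurable.indicator (by fun_prop) htriangle
  calc
    _ = ∫⁻ v in Ioo s t, ∫⁻ x in Ioo s t,
          {z : ℝ × ℝ | z.2 < z.1}.indicator (fun z => g z.1 * f z.2) (v, x) := by
      refine setLIntegral_congr_fun measurableSet_Ioo fun v hv => ?_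
      have hinter : Iio v ∩ Ioo s t = Ioo s v := by
        rw [inter_comm, Ioo_inter_Iio, min_eq_right hv.2.le]
      rw [← lintegral_const_mul _ hf, ← hinter, ← Measure.restrict_restrict measurableSet_Iio,
        ← lintegral_indicator measurableSet_Iio]
      rfl
    _ = ∫⁻ x in Ioo s t, ∫⁻ v in Ioo s t,
          {z : ℝ × ℝ | z.2 < z.1}.indicator (fun z => g z.1 * f z.2) (v, x) :=
      lintegral_lintegral_swap hmeas.aemeasurable
    _ = _ := by
      refine setLIntegral_congr_fun measurableSet_Ioo fun x hx => ?_
      have hinter : Ioi x ∩ Ioo s t = Ioo x t := by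
        rw [inter_comm, Ioo_inter_Ioi, max_eq_right hx.1.le]
      rw [← lintegral_const_mul _ hg, ← hinter, ← Measure.restrict_restrict measurableSet_Ioi,
        ← lintegral_indicator measurableSet_Ioi]
      simp only [indicator, mem_ofPred_eq, mem_Ioi, mul_comm]

lemma lintegral_mul_epow_mul_lintegral_Ioo {u m : ℝ} (hu : u < 1) (hm : 0 < m) {f : ℝ → ℝ≥0∞}
    (hf : Measurable f) :
    ∫⁻ v in Ioo (0 : ℝ) 1, epow (1 - v) (m - 1) * epow (1 - u * v) (-(m + 1)) *
        ∫⁻ x in Ioo 0 v, f x =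
      ENNReal.ofReal (1 / m) * (epow (1 - u) (-1) *
        ∫⁻ x in Ioo (0 : ℝ) 1, f x * epow (1 - x) m * epow (1 - u * x) (-m)) := by
  rw [lintegral_Ioo_mul_lintegral_Ioo_swap hf (by fun_prop), ← mul_assoc,
    ← lintegral_const_mul _ (by fun_prop)]
  refine setLIntegral_congr_fun measurableSet_Ioo fun x hx => ?_
  rw [lintegral_Ioo_epow_one_sub_mul_epow_one_sub_mul hu hm ⟨hx.1.le, hx.2⟩]
  ring

/-- Integration by parts in `v`, performed under the integral sign of `eulerIntegral`. -/
lemma lintegral_lintegral_Ioo_mul_eulerIntegral {m : ℝ} (hm : 0 < m) {f : ℝ → ℝ≥0∞}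
    (hf : Measurable f) (q p : ℝ) :
    ∫⁻ v in Ioo (0 : ℝ) 1, epow (1 - v) (m - 1) * (∫⁻ x in Ioo 0 v, f x) *
        eulerIntegral (m + 1) q (p + 1) v =
      ENNReal.ofReal (1 / m) *
        ∫⁻ x in Ioo (0 : ℝ) 1, f x * epow (1 - x) m * eulerIntegral m q p x := by
  rw [lintegral_mul_eulerIntegral (by fun_prop), lintegral_mul_eulerIntegral (by fun_prop),
    ← lintegral_const_mul' _ _ ENNReal.ofReal_ne_top]
  refine setLIntegral_congr_fun measurableSet_Ioo fun u hu => ?_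
  simp only [mul_right_comm (epow _ (m - 1))]
  rw [lintegral_mul_epow_mul_lintegral_Ioo hu.2 hm hf, add_sub_cancel_right, sub_eq_add_neg p,
    epow_add (sub_pos.2 hu.2)]
  ring

end IncompleteIntegral

section Thomae

variable {a b p q r : ℝ}

/-- Thomae's transformation: the integral of `x^(p-1) (1-x)^(q-1) y^(b-1) (1-y)^(r-1) (1-xy)^(-a)`
over the unit square is evaluated in both orders, in one of them after Euler's transformation. -/
lemma beta_mul_ehyp3F2_one_eq (ha : 0 < a) (hb : 0 < b) (hp : 0 < p) (hq : 0 < q)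
    (hr : 0 < r) (hpq : a < p + q) (hqr : a < q + r) :
    ENNReal.ofReal (beta b r) * ehyp3F2 a b p (b + r) (p + q) 1 =
      ENNReal.ofReal (beta b (q + r - a)) *
        ehyp3F2 (p + q - a) q b (p + q) (b + (q + r - a)) 1 := by
  have hbeta : ENNReal.ofReal (beta p q) ≠ 0 :=
    (ENNReal.ofReal_pos.2 (ProbabilityTheory.beta_pos hp hq)).ne'
  rw [← ENNReal.mul_right_inj hbeta ENNReal.ofReal_ne_top]
  calc
    _ = ENNReal.ofReal (beta b r) * ∫⁻ x in Ioo (0 : ℝ) 1,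
          epow x (p - 1) * epow (1 - x) (q - 1) * ehyp2F1 a b (b + r) (1 * x) := by
      rw [lintegral_epow_mul_epow_one_sub_mul_ehyp2F1 ha hb (by positivity) hp hq zero_le_one]
      ring
    _ = ∫⁻ x in Ioo (0 : ℝ) 1, epow x (p - 1) * epow (1 - x) (q - 1) * eulerIntegral a b r x := by
      rw [← lintegral_const_mul _ (by fun_prop)]
      refine setLIntegral_congr_fun measurableSet_Ioo fun x hx => ?_
      rw [eulerIntegral_eq_beta_mul_ehyp2F1 ha hb hr ⟨hx.1.le, hx.2⟩, one_mul]
      ring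
    _ = ∫⁻ y in Ioo (0 : ℝ) 1, epow y (b - 1) * epow (1 - y) (r - 1) * eulerIntegral a p q y :=
      lintegral_mul_eulerIntegral (by fun_prop) a b r
    _ = ENNReal.ofReal (beta p q) * ∫⁻ y in Ioo (0 : ℝ) 1,
          epow y (b - 1) * epow (1 - y) (q + r - a - 1) *
            ehyp2F1 (p + q - a) q (p + q) (1 * y) := by
      rw [← lintegral_const_mul _ (by fun_prop)]
      refine setLIntegral_congr_fun measurableSet_Ioo fun y hy => ?_
      rw [eulerIntegral_eq_epow_mul_eulerIntegral hy.2,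
        eulerIntegral_eq_beta_mul_ehyp2F1 (by linarith) hq hp ⟨hy.1.le, hy.2⟩, one_mul, beta_comm,
        add_comm q p, show q + r - a - 1 = r - 1 + (q - a) by ring, epow_add (sub_pos.2 hy.2)]
      ring
    _ = _ := by
      rw [lintegral_epow_mul_epow_one_sub_mul_ehyp2F1 (by linarith) hq (by positivity) hb
        (by linarith) zero_le_one]

lemma hyp3F2_one_eq_beta_div_beta_mul_hyp3F2_one (ha : 0 < a) (hb : 0 < b) (hp : 0 < p)
    (hq : 0 < q) (hr : 0 < r) (hpq : a < p + q) (hqr : a < q + r) :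
    hyp3F2 a b p (b + r) (p + q) 1 =
      beta b (q + r - a) / beta b r *
        hyp3F2 (p + q - a) q b (p + q) (b + (q + r - a)) 1 := by
  have hpqa : 0 < p + q - a := sub_pos.2 hpq
  have hqra : 0 < q + r - a := sub_pos.2 hqr
  have hbr := ProbabilityTheory.beta_pos hb hr
  have h := congrArg ENNReal.toReal (beta_mul_ehyp3F2_one_eq ha hb hp hq hr hpq hqr)
  rw [ENNReal.toReal_mul, ENNReal.toReal_mul, ENNReal.toReal_ofReal hbr.le,
    ENNReal.toReal_ofReal (ProbabilityTheory.beta_pos hb hqra).le,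
    toReal_ehyp3F2 ha hb hp (by positivity) (by positivity) zero_le_one,
    toReal_ehyp3F2 hpqa hq hb (by positivity) (by positivity) zero_le_one] at h
  rw [div_mul_eq_mul_div, eq_div_iff hbr.ne', mul_comm, h]

end Thomae

section DoubleIntegral

/-- The integrand `u^(c-b) (1-u)^(q-1) v^(c-1) (1-uv)^(-a) ₂F₁(1,b;c;v)` of the double integral to
be evaluated, with values in `[0, ∞]`. -/
noncomputable def squareIntegrand (a b c q u v : ℝ) : ℝ≥0∞ :=
  epow u (c - b) * epow (1 - u) (q - 1) * epow v (c - 1) * epow (1 - u * v) (-a) * ehyp2F1 1 b c v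

variable {a b c q : ℝ}

@[fun_prop]
lemma measurable_squareIntegrand {α : Type*} [MeasurableSpace α] {f g : α → ℝ}
    (hf : Measurable f) (hg : Measurable g) (a b c q : ℝ) :
    Measurable fun x => squareIntegrand a b c q (f x) (g x) := by
  unfold squareIntegrand
  fun_prop

lemma toReal_squareIntegrand (hb : 0 < b) (hc : 0 < c) {u v : ℝ} (hu : u ∈ Icc (0 : ℝ) 1)
    (hv : v ∈ Icc (0 : ℝ) 1) :
    (squareIntegrand a b c q u v).toReal =
      u ^ (c - b) * (1 - u) ^ (q - 1) * v ^ (c - 1) * (1 - u * v) ^ (-a) * hyp2F1 1 b c v := by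
  have hu' : 0 ≤ 1 - u := sub_nonneg.2 hu.2
  have huv : 0 ≤ 1 - u * v := sub_nonneg.2 (mul_le_one₀ hu.2 hv.1 hv.2)
  simp only [squareIntegrand, ENNReal.toReal_mul, toReal_epow hu.1, toReal_epow hu',
    toReal_epow hv.1, toReal_epow huv, toReal_ehyp2F1 one_pos hb hc hv.1]

lemma lintegral_epow_mul_ehyp2F1_one (hb : 0 < b) (hc : 1 < c) (hbc : b < c) :
    ∫⁻ v in Ioo (0 : ℝ) 1, epow v (c - 1) * ehyp2F1 1 b c v = ENNReal.ofReal (1 / (c - b)) := by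
  have hcb : 0 < c - b := sub_pos.2 hbc
  have hc' : 0 < c - 1 := sub_pos.2 hc
  calc
    _ = ENNReal.ofReal (c - 1) * ∫⁻ v in Ioo (0 : ℝ) 1,
          epow (1 - v) (c - b - 1) * epow (1 - 0 * v) (-(c - b + 1)) *
            ∫⁻ x in Ioo 0 v, epow x (c - 2) * epow (1 - x) (b - c) := by
      rw [← lintegral_const_mul _ (by fun_prop)]
      refine setLIntegral_congr_fun measurableSet_Ioo fun v hv => ?_
      rw [epow_mul_ehyp2F1_one_eq_mul_lintegral_Ioo hb hc hv, sub_right_comm, zero_mul,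
        sub_zero, one_epow, mul_one]
    _ = ENNReal.ofReal (c - 1) * (ENNReal.ofReal (1 / (c - b)) *
          ∫⁻ x in Ioo (0 : ℝ) 1, epow x (c - 1 - 1)) := by
      rw [lintegral_mul_epow_mul_lintegral_Ioo zero_lt_one hcb (by fun_prop), sub_zero, one_epow,
        one_mul]
      congr 2
      refine setLIntegral_congr_fun measurableSet_Ioo fun x hx => ?_
      rw [zero_mul, sub_zero, one_epow, mul_one, mul_assoc, ← epow_add (sub_pos.2 hx.2),
        sub_add_sub_cancel, sub_self, epow_zero, mul_one, sub_sub, one_add_one_eq_two]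
    _ = _ := by
      rw [lintegral_Ioo_zero_epow zero_le_one hc', one_epow, mul_one, mul_left_comm,
        ← ENNReal.ofReal_mul hc'.le, mul_one_div_cancel hc'.ne', ENNReal.ofReal_one, mul_one]

lemma lintegral_squareIntegrand_lt_top (ha : 0 < a) (hb : 0 < b) (hc : 1 < c) (hbc : b < c)
    (q : ℝ) {u : ℝ} (hu : u ∈ Ioo (0 : ℝ) 1) :
    ∫⁻ v in Ioo (0 : ℝ) 1, squareIntegrand a b c q u v < ∞ := by
  calc
    _ ≤ ∫⁻ v in Ioo (0 : ℝ) 1, epow u (c - b) * epow (1 - u) (q - 1) * epow (1 - u) (-a) *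
          (epow v (c - 1) * ehyp2F1 1 b c v) := by
      refine setLIntegral_mono (by fun_prop) fun v hv => ?_
      have hle : epow (1 - u * v) (-a) ≤ epow (1 - u) (-a) :=
        epow_le_epow_of_nonpos (sub_pos.2 hu.2) (by nlinarith [hu.1, hv.2]) (neg_nonpos.2 ha.le)
      calc
        _ = epow u (c - b) * epow (1 - u) (q - 1) * epow (1 - u * v) (-a) *
              (epow v (c - 1) * ehyp2F1 1 b c v) := by
          rw [squareIntegrand]
          ring
        _ ≤ _ := by gcongr
    _ = epow u (c - b) * epow (1 - u) (q - 1) * epow (1 - u) (-a) *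
          ENNReal.ofReal (1 / (c - b)) := by
      rw [lintegral_const_mul _ (by fun_prop), lintegral_epow_mul_ehyp2F1_one hb hc hbc]
    _ < ∞ := by
      unfold epow
      finiteness

lemma intervalIntegral_toReal_eq_toReal_lintegral {g : ℝ → ℝ≥0∞} {s t : ℝ} (hst : s ≤ t)
    (hg : Measurable g) (hfin : ∀ᵐ x ∂volume.restrict (Ioo s t), g x < ∞) :
    ∫ x in s..t, (g x).toReal = (∫⁻ x in Ioo s t, g x).toReal := by
  rw [intervalIntegral.integral_of_le hst, integral_Ioc_eq_integral_Ioo,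
    integral_toReal hg.aemeasurable hfin]

lemma integral_integral_eq_toReal_lintegral_squareIntegrand (ha : 0 < a) (hb : 0 < b)
    (hc : 1 < c) (hbc : b < c) (q : ℝ) :
    (∫ u in (0 : ℝ)..1, ∫ v in (0 : ℝ)..1,
      u ^ (c - b) * (1 - u) ^ (q - 1) * v ^ (c - 1) * (1 - u * v) ^ (-a) * hyp2F1 1 b c v) =
      (∫⁻ u in Ioo (0 : ℝ) 1, ∫⁻ v in Ioo (0 : ℝ) 1, squareIntegrand a b c q u v).toReal := by
  have hmeas : Measurable fun u => ∫⁻ v in Ioo (0 : ℝ) 1, squareIntegrand a b c q u v :=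
    Measurable.lintegral_prod_right' (f := fun z : ℝ × ℝ => squareIntegrand a b c q z.1 z.2)
      (by fun_prop)
  have hfin (u : ℝ) (hu : u ∈ Ioo (0 : ℝ) 1) :
      ∫⁻ v in Ioo (0 : ℝ) 1, squareIntegrand a b c q u v < ∞ :=
    lintegral_squareIntegrand_lt_top ha hb hc hbc q hu
  rw [← intervalIntegral_toReal_eq_toReal_lintegral zero_le_one hmeas
    (ae_restrict_of_forall_mem measurableSet_Ioo hfin)]
  refine intervalIntegral.integral_congr_Ioo_of_le zero_le_one fun u hu => ?_
  rw [← intervalIntegral_toReal_eq_toReal_lintegral zero_le_one (by fun_prop)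
    (ae_lt_top (by fun_prop) (hfin u hu).ne)]
  refine intervalIntegral.integral_congr_Ioo_of_le zero_le_one fun v hv => ?_
  exact (toReal_squareIntegrand hb (zero_lt_one.trans hc) (Ioo_subset_Icc_self hu)
    (Ioo_subset_Icc_self hv)).symm

lemma lintegral_lintegral_squareIntegrand_eq_eulerIntegral (hb : 0 < b) (hc : 1 < c)
    (hm : 0 < q + c - a - b) :
    ∫⁻ u in Ioo (0 : ℝ) 1, ∫⁻ v in Ioo (0 : ℝ) 1, squareIntegrand a b c q u v =
      ENNReal.ofReal (c - 1) * (ENNReal.ofReal (1 / (q + c - a - b)) * ∫⁻ x in Ioo (0 : ℝ) 1,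
        epow x (c - 2) * epow (1 - x) (q - a) * eulerIntegral (q + c - a - b) q (c - b) x) := by
  calc
    _ = ∫⁻ v in Ioo (0 : ℝ) 1, epow v (c - 1) * ehyp2F1 1 b c v *
          eulerIntegral a (c - b + 1) q v := by
      rw [lintegral_mul_eulerIntegral (by fun_prop), add_sub_cancel_right]
      refine lintegral_congr fun u => ?_
      rw [← lintegral_const_mul _ (by fun_prop)]
      refine lintegral_congr fun v => ?_
      rw [squareIntegrand]
      ring
    _ = ENNReal.ofReal (c - 1) * ∫⁻ v in Ioo (0 : ℝ) 1, epow (1 - v) (q + c - a - b - 1) *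
          (∫⁻ x in Ioo 0 v, epow x (c - 2) * epow (1 - x) (b - c)) *
            eulerIntegral (q + c - a - b + 1) q (c - b + 1) v := by
      rw [← lintegral_const_mul _ (by fun_prop)]
      refine setLIntegral_congr_fun measurableSet_Ioo fun v hv => ?_
      rw [epow_mul_ehyp2F1_one_eq_mul_lintegral_Ioo hb hc hv,
        eulerIntegral_eq_epow_mul_eulerIntegral hv.2,
        show q + c - a - b - 1 = c - 1 - b + (q - a) by ring, epow_add (sub_pos.2 hv.2),
        show c - b + 1 + q - a = q + c - a - b + 1 by ring]
      ring
    _ = _ := by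
      rw [lintegral_lintegral_Ioo_mul_eulerIntegral hm (by fun_prop)]
      congr 2
      refine setLIntegral_congr_fun measurableSet_Ioo fun x hx => ?_
      rw [mul_assoc (epow x _), ← epow_add (sub_pos.2 hx.2),
        show b - c + (q + c - a - b) = q - a by ring]

lemma lintegral_lintegral_squareIntegrand_eq_ehyp3F2 (hb : 0 < b) (hc : 1 < c) (hbc : b < c)
    (hq : 0 < q) (haq : a < q + 1) (hm : 0 < q + c - a - b) :
    ∫⁻ u in Ioo (0 : ℝ) 1, ∫⁻ v in Ioo (0 : ℝ) 1, squareIntegrand a b c q u v =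
      ENNReal.ofReal (c - 1) * (ENNReal.ofReal (1 / (q + c - a - b)) *
        (ENNReal.ofReal (beta q (c - b)) * (ENNReal.ofReal (beta (c - 1) (1 + q - a)) *
          ehyp3F2 (q + c - a - b) q (c - 1) (q + c - b) (c + q - a) 1))) := by
  have hseries : ∫⁻ x in Ioo (0 : ℝ) 1,
        epow x (c - 2) * epow (1 - x) (q - a) * eulerIntegral (q + c - a - b) q (c - b) x =
      ENNReal.ofReal (beta q (c - b)) * ∫⁻ x in Ioo (0 : ℝ) 1, epow x (c - 1 - 1) *
        epow (1 - x) (1 + q - a - 1) * ehyp2F1 (q + c - a - b) q (q + c - b) (1 * x) := by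
    rw [← lintegral_const_mul _ (by fun_prop)]
    refine setLIntegral_congr_fun measurableSet_Ioo fun x hx => ?_
    rw [eulerIntegral_eq_beta_mul_ehyp2F1 hm hq (sub_pos.2 hbc) ⟨hx.1.le, hx.2⟩, one_mul,
      ← add_sub_assoc, show 1 + q - a - 1 = q - a by ring, show c - 1 - 1 = c - 2 by ring]
    ring
  rw [lintegral_lintegral_squareIntegrand_eq_eulerIntegral hb hc hm, hseries,
    lintegral_epow_mul_epow_one_sub_mul_ehyp2F1 hm hq (by linarith) (sub_pos.2 hc) (by linarith)
      zero_le_one, show c - 1 + (1 + q - a) = c + q - a by ring]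

lemma beta_mul_beta_mul_beta_one_div (ha : 0 < a) (hc : 1 < c) (hbc : b < c) (hq : 0 < q)
    (haq : a < q + 1) (hm : 0 < q + c - a - b) :
    (c - 1) * (1 / (q + c - a - b) * (beta q (c - b) * (beta (c - 1) (1 + q - a) *
      (beta (q + c - a - b) 1 / beta (q + c - a - b) a)))) =
      Gamma q * Gamma (c - b) * Gamma c * Gamma (1 + q - a) /
        ((q + c - a - b) * Gamma (q + c - a - b + 1) * Gamma (c + q - a) * Gamma a) := by
  have hc' : 0 < c - 1 := sub_pos.2 hc
  have hGc : Gamma c = (c - 1) * Gamma (c - 1) := by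
    rw [← Gamma_add_one hc'.ne', sub_add_cancel]
  have hGa := (Gamma_pos_of_pos ha).ne'
  have hGm := (Gamma_pos_of_pos hm).ne'
  have hGqcb := (Gamma_pos_of_pos (show 0 < q + c - b by linarith)).ne'
  have hGcqa := (Gamma_pos_of_pos (show 0 < c + q - a by linarith)).ne'
  rw [beta_one_right hm, beta, beta, beta, Gamma_add_one hm.ne', hGc,
    show q + (c - b) = q + c - b by ring, show c - 1 + (1 + q - a) = c + q - a by ring,
    show q + c - a - b + a = q + c - b by ring]
  field_simp

end DoubleIntegral

theorem double_integral_I2a_form2_general {a b c q : ℝ} (ha : 0 < a) (hb : 0 < b) (hc : 1 < c)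
    (hq : 0 < q) (hac : a < c) (hbc : b < c) (haq : a < q + 1) (habq : a + b < q + c) :
    (∫ u in (0 : ℝ)..1, ∫ v in (0 : ℝ)..1,
      u ^ (c - b) * (1 - u) ^ (q - 1) * v ^ (c - 1) * (1 - u * v) ^ (-a) * hyp2F1 1 b c v) =
      Gamma q * Gamma (c - b) * Gamma c * Gamma (1 + q - a) /
        ((q + c - a - b) * Gamma (q + c - a - b + 1) * Gamma (c + q - a) * Gamma a) *
        hyp3F2 (c - a) (1 + q - a) (q + c - a - b) (c + q - a) (q + c - a - b + 1) 1 := by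
  have hm : 0 < q + c - a - b := by linarith
  have hc' : 0 < c - 1 := sub_pos.2 hc
  have hqa : 0 < 1 + q - a := by linarith
  have hcqa : 0 < c + q - a := by linarith
  have hthomae := hyp3F2_one_eq_beta_div_beta_mul_hyp3F2_one hq hm hc' hqa ha (by linarith)
    (by linarith)
  rw [show q + c - a - b + a = q + c - b by ring, show c - 1 + (1 + q - a) = c + q - a by ring,
    show 1 + q - a + a - q = 1 by ring, show c + q - a - q = c - a by ring] at hthomae
  rw [integral_integral_eq_toReal_lintegral_squareIntegrand ha hb hc hbc,
    lintegral_lintegral_squareIntegrand_eq_ehyp3F2 hb hc hbc hq haq hm, ehyp3F2_comm,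
    ← beta_mul_beta_mul_beta_one_div ha hc hbc hq haq hm]
  simp only [ENNReal.toReal_mul]
  rw [toReal_ehyp3F2 hq hm hc' (by linarith) hcqa zero_le_one, hthomae,
    ENNReal.toReal_ofReal hc'.le, ENNReal.toReal_ofReal (one_div_pos.2 hm).le,
    ENNReal.toReal_ofReal (ProbabilityTheory.beta_pos hq (sub_pos.2 hbc)).le,
    ENNReal.toReal_ofReal (ProbabilityTheory.beta_pos hc' hqa).le]
  ring

theorem double_integral_I2a_form2 (d : ℝ) (hd0 : 0 < d) (hd1 : d < 4 / 5) :
    (∫ u in (0:ℝ)..1, ∫ v in (0:ℝ)..1,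
      u ^ (2 - 2 * d) * (1 - u) ^ (1 - 2 * d) * v ^ (1 - d) * (1 - u * v) ^ (-d) *
        hyp2F1 1 d (2 - d) v)
    = (1 - d) ^ 2 * Real.Gamma (1 - d) ^ 2 * Real.Gamma (2 - 2 * d) ^ 2 *
        Real.Gamma (3 - 3 * d) /
        (Real.Gamma (2 - d) * Real.Gamma d * (4 - 5 * d) * Real.Gamma (4 - 4 * d) *
          Real.Gamma (5 - 5 * d)) *
        hyp3F2 (2 - 2 * d) (3 - 3 * d) (4 - 5 * d) (4 - 4 * d) (5 - 5 * d) 1 := by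
  have hGamma : Gamma (2 - d) = (1 - d) * Gamma (1 - d) := by
    rw [← Gamma_add_one (by linarith), show 1 - d + 1 = 2 - d by ring]
  have hGamma_ne : Gamma (2 - d) ≠ 0 := (Gamma_pos_of_pos (by linarith)).ne'
  have h := double_integral_I2a_form2_general (a := d) (b := d) (c := 2 - d) (q := 2 - 2 * d) hd0
    hd0 (by linarith) (by linarith) (by linarith) (by linarith) (by linarith) (by linarith)
  rw [show 2 - d - d = 2 - 2 * d by ring, show 2 - 2 * d - 1 = 1 - 2 * d by ring,
    show 2 - d - 1 = 1 - d by ring, show 1 + (2 - 2 * d) - d = 3 - 3 * d by ring,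
    show 2 - 2 * d + (2 - d) - d - d = 4 - 5 * d by ring,
    show 2 - d + (2 - 2 * d) - d = 4 - 4 * d by ring,
    show 4 - 5 * d + 1 = 5 - 5 * d by ring] at h
  rw [h, ← mul_pow, ← hGamma]
  field_simp
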